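/- arXiv:2605.22451 — 3 statements merged into one kernel-verified Lean document; each statement's English description precedes it below -/
import Mathlib

section
/- Let f : ℝ → ℝ be positive-valued, convex and twice continuously differentiable, R > 0, t² + f(t)² > R² for all t, and let x(t), y(t) be the equidistant parameterization on the admissible domain D = {t : α(t) < R}. Setting r(t) := √(x(t)² + y(t)²) and g(t) := (x(t) − t)/(r(t) − R), the compatibility identity (g(t) − x(t)/r(t))·x'(t) = (√(1 − g(t)²) + y(t)/r(t))·y'(t) holds for all t ∈ D; moreover the coefficient √(1 − g(t)²) + y(t)/r(t) is strictly positive for all t ∈ D. -/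
open Metric Set

noncomputable section

/-!
Let `c` be a point of the curve and `n` a unit normal there. The point `P = c + d • n` has distance
`d` from `c` along the normal and `‖P‖ - R` from the circle, and the two agree exactly for
`d = (‖c‖² - R²) / (2 (R - ⟪c, n⟫))`. As `c` moves along the curve, the velocity `P'` satisfies
`⟪n, P'⟫ = d'`, because `n` is orthogonal to both `c'` and `n'`, and `⟪P / ‖P‖, P'⟫ = ‖P‖' = d'`,
because `‖P‖ = R + d`. Hence `⟪n - P / ‖P‖, P'⟫ = 0`. For the graph of `f` with its downward unit
normal `n = (g, -√(1 - g²))` this is the compatibility identity, and the coefficient of `y'` is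
`(f + R √(1 - g²)) / ‖P‖`.
-/

open Real (sin cos arctan)
open scoped Topology RealInnerProductSpace

section InnerProductSpace

variable {E : Type*} [NormedAddCommGroup E] [InnerProductSpace ℝ E]

/-- The signed length to go from `p` along the unit normal `n` to reach the point equidistant from
`p` and the circle of radius `R` about the origin, which exists on that line for `⟪p, n⟫ < R`. -/
def equidistantOffset (R : ℝ) (p n : E) : ℝ :=
  (‖p‖ ^ 2 - R ^ 2) / (2 * (R - ⟪p, n⟫))

/-- The point on the normal line `p + ℝ n` equidistant from `p` and the circle of radius `R` about
the origin. -/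
def equidistantPoint (R : ℝ) (p n : E) : E :=
  p + equidistantOffset R p n • n

variable {R : ℝ}

lemma norm_sub_smul_sq_of_norm_eq_one (p : E) {n : E} (hn : ‖n‖ = 1) :
    ‖p - R • n‖ ^ 2 = ‖p‖ ^ 2 - 2 * R * ⟪p, n⟫ + R ^ 2 := by
  rw [norm_sub_sq_real, real_inner_smul_right, norm_smul, hn, mul_one, Real.norm_eq_abs, sq_abs]
  ring

lemma radius_add_equidistantOffset_eq {p n : E} (hn : ‖n‖ = 1) (h : ⟪p, n⟫ ≠ R) :
    R + equidistantOffset R p n = ‖p - R • n‖ ^ 2 / (2 * (R - ⟪p, n⟫)) := by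
  have hne : R - ⟪p, n⟫ ≠ 0 := sub_ne_zero.2 h.symm
  rw [norm_sub_smul_sq_of_norm_eq_one p hn, equidistantOffset]
  field_simp
  ring

lemma radius_add_equidistantOffset_pos {p n : E} (hn : ‖n‖ = 1) (h : ⟪p, n⟫ < R) :
    0 < R + equidistantOffset R p n := by
  have hp : p - R • n ≠ 0 := by
    intro h0
    rw [sub_eq_zero.1 h0, real_inner_smul_left, real_inner_self_eq_norm_sq, hn] at h
    simp only [one_pow, mul_one, lt_self_iff_false] at h
  rw [radius_add_equidistantOffset_eq hn h.ne]
  have : 0 < R - ⟪p, n⟫ := sub_pos.2 h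
  positivity

lemma norm_equidistantPoint {p n : E} (hn : ‖n‖ = 1) (h : ⟪p, n⟫ < R) :
    ‖equidistantPoint R p n‖ = R + equidistantOffset R p n := by
  rw [← sq_eq_sq₀ (norm_nonneg _) (radius_add_equidistantOffset_pos hn h).le]
  have hne : R - ⟪p, n⟫ ≠ 0 := (sub_pos.2 h).ne'
  have hd : equidistantOffset R p n * (2 * (R - ⟪p, n⟫)) = ‖p‖ ^ 2 - R ^ 2 :=
    div_mul_cancel₀ _ (mul_ne_zero two_ne_zero hne)
  rw [equidistantPoint, norm_add_sq_real, real_inner_smul_right, norm_smul, hn, mul_one,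
    Real.norm_eq_abs, sq_abs]
  linear_combination -hd

lemma inner_deriv_eq_norm_mul_deriv_norm {P : ℝ → E} {ρ : ℝ → ℝ} {t : ℝ}
    (hP : DifferentiableAt ℝ P t) (hρ : DifferentiableAt ℝ ρ t)
    (hnorm : (fun s ↦ ‖P s‖) =ᶠ[𝓝 t] ρ) :
    ⟪P t, deriv P t⟫ = ‖P t‖ * deriv ρ t := by
  have hsq : HasDerivAt (fun s ↦ ‖P s‖ ^ 2) (2 * ‖P t‖ * deriv ρ t) t := by
    simpa using (hρ.hasDerivAt.congr_of_eventuallyEq hnorm).fun_pow 2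
  linarith [hP.hasDerivAt.norm_sq.unique hsq]

lemma inner_deriv_eq_zero_of_norm_eq {n : ℝ → E} {C t : ℝ} (hn : DifferentiableAt ℝ n t)
    (hC : ∀ᶠ s in 𝓝 t, ‖n s‖ = C) : ⟪n t, deriv n t⟫ = 0 := by
  rw [inner_deriv_eq_norm_mul_deriv_norm hn (differentiableAt_const C) hC, deriv_const, mul_zero]

lemma inner_normal_deriv_add_smul {c n : ℝ → E} {d : ℝ → ℝ} {t : ℝ}
    (hc : DifferentiableAt ℝ c t) (hn : DifferentiableAt ℝ n t) (hd : DifferentiableAt ℝ d t)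
    (hunit : ∀ᶠ s in 𝓝 t, ‖n s‖ = 1) (hperp : ⟪n t, deriv c t⟫ = 0) :
    ⟪n t, deriv (fun s ↦ c s + d s • n s) t⟫ = deriv d t := by
  rw [deriv_fun_add hc (hd.fun_smul hn), deriv_fun_smul hd hn, inner_add_right, inner_add_right,
    real_inner_smul_right, real_inner_smul_right, hperp, inner_deriv_eq_zero_of_norm_eq hn hunit,
    real_inner_self_eq_norm_sq, hunit.self_of_nhds]
  ring

lemma differentiableAt_equidistantOffset {c n : ℝ → E} {t : ℝ} (hc : DifferentiableAt ℝ c t)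
    (hn : DifferentiableAt ℝ n t) (h : ⟪c t, n t⟫ ≠ R) :
    DifferentiableAt ℝ (fun s ↦ equidistantOffset R (c s) (n s)) t :=
  ((hc.norm_sq ℝ).sub_const _).fun_div (((hc.inner ℝ hn).const_sub R).const_mul 2)
    (mul_ne_zero two_ne_zero (sub_ne_zero.2 h.symm))

theorem inner_normal_sub_radial_deriv_equidistantPoint {c n : ℝ → E} {t : ℝ}
    (hc : DifferentiableAt ℝ c t) (hn : DifferentiableAt ℝ n t) (hunit : ∀ᶠ s in 𝓝 t, ‖n s‖ = 1)
    (hperp : ⟪n t, deriv c t⟫ = 0) (hR : ⟪c t, n t⟫ < R) :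
    ⟪n t - ‖equidistantPoint R (c t) (n t)‖⁻¹ • equidistantPoint R (c t) (n t),
      deriv (fun s ↦ equidistantPoint R (c s) (n s)) t⟫ = 0 := by
  have hd := differentiableAt_equidistantOffset hc hn hR.ne
  have hnorm : (fun s ↦ ‖equidistantPoint R (c s) (n s)‖) =ᶠ[𝓝 t]
      fun s ↦ R + equidistantOffset R (c s) (n s) := by
    filter_upwards [(hc.inner ℝ hn).continuousAt.eventually_lt_const hR, hunit]
      with s hsR hsunit
    exact norm_equidistantPoint hsunit hsR
  have hpos : ‖equidistantPoint R (c t) (n t)‖ ≠ 0 :=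
    (norm_equidistantPoint hunit.self_of_nhds hR).trans_ne
      (radius_add_equidistantOffset_pos hunit.self_of_nhds hR).ne'
  have hradial := inner_deriv_eq_norm_mul_deriv_norm (hc.fun_add (hd.fun_smul hn))
    (hd.const_add R) hnorm
  have hnormal := inner_normal_deriv_add_smul hc hn hd hunit hperp
  rw [deriv_const_add] at hradial
  simp only [equidistantPoint] at hradial hpos ⊢
  rw [inner_sub_left, real_inner_smul_left, hradial, hnormal, inv_mul_cancel_left₀ hpos, sub_self]

end InnerProductSpace

lemma deriv_euclideanSpace_apply {ι : Type*} [Finite ι] {P : ℝ → EuclideanSpace ℝ ι} {t : ℝ}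
    (hP : DifferentiableAt ℝ P t) (i : ι) : deriv (fun s ↦ P s i) t = deriv P t i := by
  have := Fintype.ofFinite ι
  exact ((EuclideanSpace.proj (𝕜 := ℝ) i).hasFDerivAt.comp_hasDerivAt t hP.hasDerivAt).deriv

lemma inner_euclideanSpace_fin_two (u v : EuclideanSpace ℝ (Fin 2)) :
    ⟪u, v⟫ = u 0 * v 0 + u 1 * v 1 := by
  simp [PiLp.inner_apply, Fin.sum_univ_two, mul_comm]

section Graph

/-- The point of the graph of `f` over `t`. -/
def graphPoint (f : ℝ → ℝ) (t : ℝ) : EuclideanSpace ℝ (Fin 2) := !₂[t, f t]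

/-- The downward unit normal of a line of slope `m`, written through the inclination `arctan m`
instead of as `(m, -1) / √(1 + m²)` to make its length and its smoothness immediate. -/
def downwardNormal (m : ℝ) : EuclideanSpace ℝ (Fin 2) :=
  !₂[sin (arctan m), -cos (arctan m)]

/-- The curve of the points equidistant from the graph of `f` and the circle of radius `R` about the
origin: the paper's `(x, y)`. -/
def equidistantCurve (R : ℝ) (f : ℝ → ℝ) (t : ℝ) : EuclideanSpace ℝ (Fin 2) :=
  equidistantPoint R (graphPoint f t) (downwardNormal (deriv f t))

variable {f : ℝ → ℝ} {R t : ℝ}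

lemma graphPoint_apply_zero (f : ℝ → ℝ) (t : ℝ) : graphPoint f t 0 = t := rfl

lemma graphPoint_apply_one (f : ℝ → ℝ) (t : ℝ) : graphPoint f t 1 = f t := rfl

lemma downwardNormal_apply_zero (m : ℝ) : downwardNormal m 0 = sin (arctan m) := rfl

lemma downwardNormal_apply_one (m : ℝ) : downwardNormal m 1 = -cos (arctan m) := rfl

lemma norm_downwardNormal (m : ℝ) : ‖downwardNormal m‖ = 1 := by
  simp [downwardNormal, EuclideanSpace.norm_eq]

lemma norm_graphPoint_sq (f : ℝ → ℝ) (t : ℝ) : ‖graphPoint f t‖ ^ 2 = t ^ 2 + f t ^ 2 := by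
  simp [graphPoint, EuclideanSpace.real_norm_sq_eq]

lemma inner_graphPoint_downwardNormal (f : ℝ → ℝ) (t m : ℝ) :
    ⟪graphPoint f t, downwardNormal m⟫ = (t * m - f t) / √(1 + m ^ 2) := by
  rw [inner_euclideanSpace_fin_two, graphPoint_apply_zero, graphPoint_apply_one,
    downwardNormal_apply_zero, downwardNormal_apply_one, Real.sin_arctan, Real.cos_arctan]
  ring

lemma differentiableAt_graphPoint (hf : DifferentiableAt ℝ f t) :
    DifferentiableAt ℝ (graphPoint f) t := by
  rw [differentiableAt_euclidean, Fin.forall_fin_two]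
  exact ⟨differentiableAt_id, hf⟩

lemma differentiable_downwardNormal : Differentiable ℝ downwardNormal := by
  rw [differentiable_euclidean, Fin.forall_fin_two]
  exact ⟨Real.differentiable_arctan.sin, Real.differentiable_arctan.cos.neg⟩

lemma differentiableAt_downwardNormal_deriv (hf' : DifferentiableAt ℝ (deriv f) t) :
    DifferentiableAt ℝ (fun s ↦ downwardNormal (deriv f s)) t :=
  (differentiable_downwardNormal (deriv f t)).comp t hf'

lemma inner_downwardNormal_deriv_graphPoint (hf : DifferentiableAt ℝ f t) :
    ⟪downwardNormal (deriv f t), deriv (graphPoint f) t⟫ = 0 := by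
  have h0 : deriv (graphPoint f) t 0 = 1 :=
    (deriv_euclideanSpace_apply (differentiableAt_graphPoint hf) 0).symm.trans (deriv_id t)
  have h1 : deriv (graphPoint f) t 1 = deriv f t :=
    (deriv_euclideanSpace_apply (differentiableAt_graphPoint hf) 1).symm
  rw [inner_euclideanSpace_fin_two, h0, h1, downwardNormal_apply_zero, downwardNormal_apply_one,
    Real.sin_arctan, Real.cos_arctan]
  ring

lemma differentiableAt_equidistantCurve (hf : DifferentiableAt ℝ f t)
    (hf' : DifferentiableAt ℝ (deriv f) t)
    (hR : ⟪graphPoint f t, downwardNormal (deriv f t)⟫ < R) :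
    DifferentiableAt ℝ (equidistantCurve R f) t := by
  have hc := differentiableAt_graphPoint hf
  have hn := differentiableAt_downwardNormal_deriv hf'
  exact hc.fun_add ((differentiableAt_equidistantOffset hc hn hR.ne).fun_smul hn)

lemma equidistantOffset_graph (R : ℝ) (f : ℝ → ℝ) (t : ℝ) :
    equidistantOffset R (graphPoint f t) (downwardNormal (deriv f t)) =
      (t ^ 2 + f t ^ 2 - R ^ 2) /
        (2 * (R - (t * deriv f t - f t) / √(1 + deriv f t ^ 2))) := by
  rw [equidistantOffset, norm_graphPoint_sq, inner_graphPoint_downwardNormal]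

lemma equidistantCurve_apply_zero (R : ℝ) (f : ℝ → ℝ) (t : ℝ) :
    equidistantCurve R f t 0 =
      t + equidistantOffset R (graphPoint f t) (downwardNormal (deriv f t)) *
        sin (arctan (deriv f t)) := rfl

lemma equidistantCurve_apply_one (R : ℝ) (f : ℝ → ℝ) (t : ℝ) :
    equidistantCurve R f t 1 =
      f t - equidistantOffset R (graphPoint f t) (downwardNormal (deriv f t)) *
        cos (arctan (deriv f t)) :=
  (congrArg (f t + ·) (mul_neg _ _)).trans (sub_eq_add_neg _ _).symm

lemma equidistantCurve_apply_zero_eq (R : ℝ) (f : ℝ → ℝ) (t : ℝ) :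
    equidistantCurve R f t 0 = t + deriv f t / (2 * √(1 + deriv f t ^ 2)) *
      ((t ^ 2 + f t ^ 2 - R ^ 2) / (R - (t * deriv f t - f t) / √(1 + deriv f t ^ 2))) := by
  rw [equidistantCurve_apply_zero, equidistantOffset_graph, Real.sin_arctan]
  simp only [div_eq_mul_inv, mul_inv]
  ring

lemma equidistantCurve_apply_one_eq (R : ℝ) (f : ℝ → ℝ) (t : ℝ) :
    equidistantCurve R f t 1 = f t - 1 / (2 * √(1 + deriv f t ^ 2)) *
      ((t ^ 2 + f t ^ 2 - R ^ 2) / (R - (t * deriv f t - f t) / √(1 + deriv f t ^ 2))) := by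
  rw [equidistantCurve_apply_one, equidistantOffset_graph, Real.cos_arctan]
  simp only [div_eq_mul_inv, mul_inv]
  ring

lemma sqrt_one_sub_sin_arctan_sq (m : ℝ) :
    √(1 - sin (arctan m) ^ 2) = cos (arctan m) :=
  (Real.cos_eq_sqrt_one_sub_sin_sq (Real.neg_pi_div_two_lt_arctan m).le
    (Real.arctan_lt_pi_div_two m).le).symm

lemma equidistantCurve_apply_zero_sub_div_norm_sub (hsep : t ^ 2 + f t ^ 2 ≠ R ^ 2)
    (hR : ⟪graphPoint f t, downwardNormal (deriv f t)⟫ < R) :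
    (equidistantCurve R f t 0 - t) / (‖equidistantCurve R f t‖ - R) =
      sin (arctan (deriv f t)) := by
  have hd : equidistantOffset R (graphPoint f t) (downwardNormal (deriv f t)) ≠ 0 :=
    div_ne_zero (by rwa [norm_graphPoint_sq, sub_ne_zero])
      (mul_ne_zero two_ne_zero (sub_pos.2 hR).ne')
  rw [equidistantCurve_apply_zero, equidistantCurve,
    norm_equidistantPoint (norm_downwardNormal _) hR, add_sub_cancel_left, add_sub_cancel_left,
    mul_div_cancel_left₀ _ hd]

lemma inner_downwardNormal_sub_radial_deriv_equidistantCurve (hf : DifferentiableAt ℝ f t)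
    (hf' : DifferentiableAt ℝ (deriv f) t)
    (hR : ⟪graphPoint f t, downwardNormal (deriv f t)⟫ < R) :
    ⟪downwardNormal (deriv f t) - ‖equidistantCurve R f t‖⁻¹ • equidistantCurve R f t,
      deriv (equidistantCurve R f) t⟫ = 0 :=
  inner_normal_sub_radial_deriv_equidistantPoint (c := graphPoint f)
    (n := fun s ↦ downwardNormal (deriv f s)) (differentiableAt_graphPoint hf)
    (differentiableAt_downwardNormal_deriv hf') (.of_forall fun _ ↦ norm_downwardNormal _)
    (inner_downwardNormal_deriv_graphPoint hf) hR

theorem equidistantCurve_compatibility (hf : DifferentiableAt ℝ f t)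
    (hf' : DifferentiableAt ℝ (deriv f) t)
    (hR : ⟪graphPoint f t, downwardNormal (deriv f t)⟫ < R) :
    (sin (arctan (deriv f t)) - equidistantCurve R f t 0 / ‖equidistantCurve R f t‖) *
        deriv (fun s ↦ equidistantCurve R f s 0) t =
      (cos (arctan (deriv f t)) + equidistantCurve R f t 1 / ‖equidistantCurve R f t‖) *
        deriv (fun s ↦ equidistantCurve R f s 1) t := by
  have hP := differentiableAt_equidistantCurve hf hf' hR
  have h := inner_downwardNormal_sub_radial_deriv_equidistantCurve hf hf' hR
  rw [inner_euclideanSpace_fin_two, PiLp.sub_apply, PiLp.sub_apply, PiLp.smul_apply,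
    PiLp.smul_apply, smul_eq_mul, smul_eq_mul, downwardNormal_apply_zero,
    downwardNormal_apply_one] at h
  rw [deriv_euclideanSpace_apply hP, deriv_euclideanSpace_apply hP]
  linear_combination h

theorem cos_arctan_add_equidistantCurve_div_norm_pos_iff
    (hR : ⟪graphPoint f t, downwardNormal (deriv f t)⟫ < R) :
    0 < cos (arctan (deriv f t)) + equidistantCurve R f t 1 / ‖equidistantCurve R f t‖ ↔
      0 < f t + R / √(1 + deriv f t ^ 2) := by
  set d := equidistantOffset R (graphPoint f t) (downwardNormal (deriv f t))
  have hpos : 0 < R + d := radius_add_equidistantOffset_pos (norm_downwardNormal _) hR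
  have hnorm : ‖equidistantCurve R f t‖ = R + d := norm_equidistantPoint (norm_downwardNormal _) hR
  have hcoeff : cos (arctan (deriv f t)) + equidistantCurve R f t 1 / (R + d) =
      (f t + R / √(1 + deriv f t ^ 2)) / (R + d) := by
    rw [equidistantCurve_apply_one, Real.cos_arctan]
    field_simp
    ring
  rw [hnorm, hcoeff, div_pos_iff_of_pos_right hpos]

end Graph

theorem stmt15_general (f : ℝ → ℝ) (hf : Differentiable ℝ f) (hf' : Differentiable ℝ (deriv f))
    (R : ℝ) (α : ℝ → ℝ)
    (hα : ∀ s : ℝ, α s = (s * deriv f s - f s) / Real.sqrt (1 + deriv f s ^ 2))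
    (x y : ℝ → ℝ)
    (hx : ∀ t : ℝ, x t = t + deriv f t / (2 * Real.sqrt (1 + deriv f t ^ 2)) *
        ((t ^ 2 + f t ^ 2 - R ^ 2) / (R - α t)))
    (hy : ∀ t : ℝ, y t = f t - 1 / (2 * Real.sqrt (1 + deriv f t ^ 2)) *
        ((t ^ 2 + f t ^ 2 - R ^ 2) / (R - α t)))
    (r g : ℝ → ℝ)
    (hr : ∀ t : ℝ, r t = Real.sqrt (x t ^ 2 + y t ^ 2))
    (hg : ∀ t : ℝ, g t = (x t - t) / (r t - R))
    (t : ℝ) (ht : α t < R) (hsep : t ^ 2 + f t ^ 2 ≠ R ^ 2) :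
    (g t - x t / r t) * deriv x t =
        (Real.sqrt (1 - g t ^ 2) + y t / r t) * deriv y t ∧
      (0 < Real.sqrt (1 - g t ^ 2) + y t / r t ↔
        0 < f t + R / Real.sqrt (1 + deriv f t ^ 2)) := by
  have hx' : x = fun s ↦ equidistantCurve R f s 0 :=
    funext fun s ↦ by rw [hx, hα, equidistantCurve_apply_zero_eq]
  have hy' : y = fun s ↦ equidistantCurve R f s 1 :=
    funext fun s ↦ by rw [hy, hα, equidistantCurve_apply_one_eq]
  have hR : ⟪graphPoint f t, downwardNormal (deriv f t)⟫ < R := by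
    rwa [inner_graphPoint_downwardNormal, ← hα]
  have hr' : r t = ‖equidistantCurve R f t‖ := by
    simp only [hr, hx', hy', EuclideanSpace.norm_eq, Fin.sum_univ_two, Real.norm_eq_abs, sq_abs]
  have hg' : g t = sin (arctan (deriv f t)) := by
    rw [hg, hr', hx', equidistantCurve_apply_zero_sub_div_norm_sub hsep hR]
  rw [hg', hr', sqrt_one_sub_sin_arctan_sq, hx', hy']
  exact ⟨equidistantCurve_compatibility (hf t) (hf' t) hR,
    cos_arctan_add_equidistantCurve_div_norm_pos_iff hR⟩

theorem stmt15 (f : ℝ → ℝ) (hfpos : ∀ t, 0 < f t)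
    (hfconv : ConvexOn ℝ Set.univ f) (hfC2 : ContDiff ℝ 2 f)
    (R : ℝ) (hR : 0 < R)
    (hsep : ∀ t : ℝ, R ^ 2 < t ^ 2 + f t ^ 2)
    (α : ℝ → ℝ)
    (hα : ∀ s : ℝ, α s = (s * deriv f s - f s) / Real.sqrt (1 + deriv f s ^ 2))
    (D : Set ℝ) (hD : D = {t : ℝ | α t < R})
    (x y : ℝ → ℝ)
    (hx : ∀ t : ℝ, x t = t + deriv f t / (2 * Real.sqrt (1 + deriv f t ^ 2)) *
        ((t ^ 2 + f t ^ 2 - R ^ 2) / (R - α t)))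
    (hy : ∀ t : ℝ, y t = f t - 1 / (2 * Real.sqrt (1 + deriv f t ^ 2)) *
        ((t ^ 2 + f t ^ 2 - R ^ 2) / (R - α t)))
    (r g : ℝ → ℝ)
    (hr : ∀ t : ℝ, r t = Real.sqrt (x t ^ 2 + y t ^ 2))
    (hg : ∀ t : ℝ, g t = (x t - t) / (r t - R)) :
    ∀ t ∈ D,
      (g t - x t / r t) * deriv x t =
          (Real.sqrt (1 - g t ^ 2) + y t / r t) * deriv y t ∧
        0 < Real.sqrt (1 - g t ^ 2) + y t / r t := by
  intro t ht
  obtain ⟨h, hpos⟩ := stmt15_general f (hfC2.differentiable two_ne_zero)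
    hfC2.differentiable_deriv_two R α hα x y hx hy r g hr hg t (hD ▸ ht :) (hsep t).ne'
  exact ⟨h, hpos.2 (add_pos (hfpos t) (by positivity))⟩

end
end

section
/- Let f : ℝ → ℝ be positive-valued, convex and continuously differentiable, R > 0, t² + f(t)² > R² for all t, and let x(t), y(t) be the equidistant parameterization on the admissible domain D = {t : α(t) < R}. Then for every t ∈ D: x(t)² + y(t)² > R², |x(t) − t| < √(x(t)²+y(t)²) − R, and f and f' are recovered from the parameterization by f(t) = y(t) + √((√(x(t)²+y(t)²) − R)² − (x(t) − t)²) and f'(t) = (x(t) − t)/√((√(x(t)²+y(t)²) − R)² − (x(t) − t)²). -/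
/-!
The point `(x t, y t)` lies on the normal to the graph of `f` at `a = (t, f t)`, below the graph.
If `n` is the upward unit normal at `a`, then `‖a - d • n‖ = R + d` becomes linear in `d` after
squaring, with solution `d = (‖a‖ ^ 2 - R ^ 2) / (2 * (R + ⟪a, n⟫))`, and `⟪a, n⟫ = -α t`: so
`(x t, y t) = a - d • n` is at distance `d` both from `a` and from the circle of radius `R`.
Hence `d = √(x ^ 2 + y ^ 2) - R`, and the right triangle with hypotenuse `d` along the normal and
horizontal leg `x - t` has vertical leg `f t - y`; its legs have ratio `f' t`.
-/

open Metric Set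

noncomputable section

section InnerProductSpace

variable {E : Type*} [NormedAddCommGroup E] [InnerProductSpace ℝ E] {R : ℝ} {a n : E}

/-- The distance `d` for which `a - d • n` is equidistant from `a` and from the sphere of radius `R`
centred at the origin, where `n` is a unit vector and `a` lies outside the sphere. It is meaningful
only when `0 < R + ⟪a, n⟫`: otherwise no such point exists on the ray from `a` along `-n`. -/
def equidistance (R : ℝ) (a n : E) : ℝ :=
  (‖a‖ ^ 2 - R ^ 2) / (R + inner ℝ a n) / 2

lemma equidistance_pos (hR : 0 ≤ R) (ha : R < ‖a‖) (hn : 0 < R + inner ℝ a n) :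
    0 < equidistance R a n :=
  half_pos (div_pos (sub_pos.mpr (pow_lt_pow_left₀ ha hR two_ne_zero)) hn)

lemma norm_sub_equidistance_smul_sq (hn : ‖n‖ = 1) (h : R + inner ℝ a n ≠ 0) :
    ‖a - equidistance R a n • n‖ ^ 2 = (R + equidistance R a n) ^ 2 := by
  have hd : 2 * equidistance R a n * (R + inner ℝ a n) = ‖a‖ ^ 2 - R ^ 2 := by
    rw [equidistance, mul_div_cancel₀ _ two_ne_zero, div_mul_cancel₀ _ h]
  rw [norm_sub_sq_real, norm_smul, mul_pow, Real.norm_eq_abs, sq_abs, hn, real_inner_smul_right]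
  linear_combination -hd

lemma norm_sub_equidistance_smul (hR : 0 ≤ R) (ha : R < ‖a‖) (hn : ‖n‖ = 1)
    (h : 0 < R + inner ℝ a n) :
    ‖a - equidistance R a n • n‖ = R + equidistance R a n :=
  (sq_eq_sq₀ (norm_nonneg _) (add_nonneg hR (equidistance_pos hR ha h).le)).mp
    (norm_sub_equidistance_smul_sq hn h.ne')

end InnerProductSpace

section Slope

variable (p t v d : ℝ)

/-- The upward unit normal to a line of slope `p` in the Euclidean plane. -/
def slopeNormal : EuclideanSpace ℝ (Fin 2) :=
  !₂[-p / √(1 + p ^ 2), 1 / √(1 + p ^ 2)]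

lemma sqrt_one_add_sq_pos : 0 < √(1 + p ^ 2) :=
  Real.sqrt_pos.mpr (by positivity)

lemma sq_sqrt_one_add_sq : √(1 + p ^ 2) ^ 2 = 1 + p ^ 2 :=
  Real.sq_sqrt (by positivity)

lemma norm_vec_two : ‖!₂[t, v]‖ = √(t ^ 2 + v ^ 2) := by
  simp [EuclideanSpace.norm_eq]

lemma norm_slopeNormal : ‖slopeNormal p‖ = 1 := by
  rw [slopeNormal, norm_vec_two, div_pow, div_pow, neg_sq, one_pow, ← add_div, add_comm,
    sq_sqrt_one_add_sq, div_self (by positivity), Real.sqrt_one]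

lemma inner_slopeNormal :
    inner ℝ !₂[t, v] (slopeNormal p) = -((t * p - v) / √(1 + p ^ 2)) := by
  simp only [slopeNormal, PiLp.inner_apply, RCLike.inner_apply, Real.ringHom_apply,
    Fin.sum_univ_two, Matrix.cons_val_zero, Matrix.cons_val_one]
  ring

lemma sub_smul_slopeNormal :
    !₂[t, v] - d • slopeNormal p =
      !₂[t + p * (d / √(1 + p ^ 2)), v - d / √(1 + p ^ 2)] := by
  ext i
  fin_cases i <;>
    simp only [slopeNormal, Fin.zero_eta, Fin.mk_one, PiLp.sub_apply, PiLp.smul_apply, smul_eq_mul,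
      Matrix.cons_val_zero, Matrix.cons_val_one] <;>
    ring

lemma equidistance_slopeNormal (R : ℝ) :
    equidistance R !₂[t, v] (slopeNormal p) =
      (t ^ 2 + v ^ 2 - R ^ 2) / (R - (t * p - v) / √(1 + p ^ 2)) / 2 := by
  rw [equidistance, inner_slopeNormal, norm_vec_two, Real.sq_sqrt (by positivity),
    ← sub_eq_add_neg]

variable {p t v d}

lemma sqrt_sq_add_sq_eq_add_of_equidistant {R : ℝ} (hR : 0 ≤ R) (hout : R ^ 2 < t ^ 2 + v ^ 2)
    (hα : (t * p - v) / √(1 + p ^ 2) < R)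
    (hd : d = (t ^ 2 + v ^ 2 - R ^ 2) / (R - (t * p - v) / √(1 + p ^ 2)) / 2) :
    √((t + p * (d / √(1 + p ^ 2))) ^ 2 + (v - d / √(1 + p ^ 2)) ^ 2) = R + d := by
  have ha : R < ‖!₂[t, v]‖ := by rwa [norm_vec_two, Real.lt_sqrt hR]
  have hn : 0 < R + inner ℝ !₂[t, v] (slopeNormal p) := by
    rwa [inner_slopeNormal, ← sub_eq_add_neg, sub_pos]
  rw [← norm_vec_two, ← sub_smul_slopeNormal, hd, ← equidistance_slopeNormal]
  exact norm_sub_equidistance_smul hR ha (norm_slopeNormal p) hn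

variable (p)

lemma abs_mul_div_sqrt_one_add_sq_lt (hd : 0 < d) : |p * (d / √(1 + p ^ 2))| < d := by
  have hp : |p| < √(1 + p ^ 2) := Real.lt_sqrt_of_sq_lt (by rw [sq_abs]; linarith)
  rw [mul_div_left_comm, abs_mul, abs_of_pos hd, abs_div, abs_of_pos (sqrt_one_add_sq_pos p)]
  exact mul_lt_of_lt_one_right hd ((div_lt_one (sqrt_one_add_sq_pos p)).mpr hp)

lemma sqrt_sq_sub_mul_div_sqrt_one_add_sq_sq (hd : 0 ≤ d) :
    √(d ^ 2 - (p * (d / √(1 + p ^ 2))) ^ 2) = d / √(1 + p ^ 2) := by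
  have hpythagoras : d ^ 2 - (p * (d / √(1 + p ^ 2))) ^ 2 = (d / √(1 + p ^ 2)) ^ 2 := by
    rw [mul_pow, div_pow, sq_sqrt_one_add_sq]
    field_simp
    ring
  rw [hpythagoras, Real.sqrt_sq (by positivity)]

end Slope

theorem stmt16_general {f : ℝ → ℝ} {f' t R α x y : ℝ} (hf : HasDerivAt f f' t) (hR : 0 ≤ R)
    (hsep : R ^ 2 < t ^ 2 + f t ^ 2) (hα : α = (t * f' - f t) / √(1 + f' ^ 2)) (hαR : α < R)
    (hx : x = t + f' / (2 * √(1 + f' ^ 2)) * ((t ^ 2 + f t ^ 2 - R ^ 2) / (R - α)))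
    (hy : y = f t - 1 / (2 * √(1 + f' ^ 2)) * ((t ^ 2 + f t ^ 2 - R ^ 2) / (R - α))) :
    R ^ 2 < x ^ 2 + y ^ 2 ∧
      |x - t| < √(x ^ 2 + y ^ 2) - R ∧
      f t = y + √((√(x ^ 2 + y ^ 2) - R) ^ 2 - (x - t) ^ 2) ∧
      HasDerivAt f ((x - t) / √((√(x ^ 2 + y ^ 2) - R) ^ 2 - (x - t) ^ 2)) t := by
  subst hα
  obtain ⟨d, hd⟩ : ∃ d, d =
    (t ^ 2 + f t ^ 2 - R ^ 2) / (R - (t * f' - f t) / √(1 + f' ^ 2)) / 2 := ⟨_, rfl⟩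
  have hd_pos : 0 < d := by
    rw [hd]
    exact half_pos (div_pos (sub_pos.mpr hsep) (sub_pos.mpr hαR))
  have hx_eq : x = t + f' * (d / √(1 + f' ^ 2)) := by rw [hx, hd]; ring
  have hy_eq : y = f t - d / √(1 + f' ^ 2) := by rw [hy, hd]; ring
  have hdist : √(x ^ 2 + y ^ 2) = R + d := by
    rw [hx_eq, hy_eq, sqrt_sq_add_sq_eq_add_of_equidistant hR hsep hαR hd]
  have hxt : x - t = f' * (d / √(1 + f' ^ 2)) := by rw [hx_eq, add_sub_cancel_left]
  have hleg : √((√(x ^ 2 + y ^ 2) - R) ^ 2 - (x - t) ^ 2) = d / √(1 + f' ^ 2) := by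
    rw [hdist, add_sub_cancel_left, hxt, sqrt_sq_sub_mul_div_sqrt_one_add_sq_sq f' hd_pos.le]
  refine ⟨?_, ?_, ?_, ?_⟩
  · rw [← Real.lt_sqrt hR, hdist]
    exact lt_add_of_pos_right R hd_pos
  · rw [hdist, add_sub_cancel_left, hxt]
    exact abs_mul_div_sqrt_one_add_sq_lt f' hd_pos
  · rw [hleg, hy_eq, sub_add_cancel]
  · rwa [hleg, hxt, mul_div_cancel_right₀ f' (div_pos hd_pos (sqrt_one_add_sq_pos f')).ne']

theorem stmt16 (f : ℝ → ℝ) (hfpos : ∀ t, 0 < f t)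
    (hfconv : ConvexOn ℝ Set.univ f) (hfC1 : ContDiff ℝ 1 f)
    (R : ℝ) (hR : 0 < R)
    (hsep : ∀ t : ℝ, R ^ 2 < t ^ 2 + f t ^ 2)
    (α : ℝ → ℝ)
    (hα : ∀ s : ℝ, α s = (s * deriv f s - f s) / Real.sqrt (1 + deriv f s ^ 2))
    (D : Set ℝ) (hD : D = {t : ℝ | α t < R})
    (x y : ℝ → ℝ)
    (hx : ∀ t : ℝ, x t = t + deriv f t / (2 * Real.sqrt (1 + deriv f t ^ 2)) *
        ((t ^ 2 + f t ^ 2 - R ^ 2) / (R - α t)))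
    (hy : ∀ t : ℝ, y t = f t - 1 / (2 * Real.sqrt (1 + deriv f t ^ 2)) *
        ((t ^ 2 + f t ^ 2 - R ^ 2) / (R - α t))) :
    ∀ t ∈ D,
      R ^ 2 < x t ^ 2 + y t ^ 2 ∧
      |x t - t| < Real.sqrt (x t ^ 2 + y t ^ 2) - R ∧
      f t = y t + Real.sqrt ((Real.sqrt (x t ^ 2 + y t ^ 2) - R) ^ 2 - (x t - t) ^ 2) ∧
      deriv f t =
        (x t - t) / Real.sqrt ((Real.sqrt (x t ^ 2 + y t ^ 2) - R) ^ 2 - (x t - t) ^ 2) := by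
  subst hD
  intro t ht
  obtain ⟨hout, habs, hval, hder⟩ := stmt16_general
    (hfC1.differentiable one_ne_zero t).hasDerivAt hR.le (hsep t) (hα t) ht (hx t) (hy t)
  exact ⟨hout, habs, hval, hder.deriv⟩

end
end

section
/- Let f : ℝ → ℝ be positive-valued, convex and twice continuously differentiable, R > 0, t² + f(t)² > R² for all t, and let the admissible domain be the open interval D = (t₀⁻, t₀⁺) = {t : α(t) < R}. Then the first component of the equidistant parameterization, x : D → ℝ, x(t) = t + (f'(t)/(2√(1+f'(t)²)))·(t² + f(t)² − R²)/(R − α(t)), is a bijection from D onto ℝ and its derivative is everywhere strictly positive; explicitly, x'(t) = (1/2)·f''(t)(t²+f(t)²−R²)(R+f(t)√(1+f'(t)²))/((1+f'(t)²)^{3/2}(R−α(t))²) + (R+f(t)√(1+f'(t)²))/(R−α(t)) > 0. -/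
open Metric Set

noncomputable section

/-! Write `s = √(1 + f'²)`, `N = t² + f² - R²` and `G = s (R - α) = R s + f - t f'`. On
`D = {0 < G}` one has `x - X = (2 (t - X) G + f' N) / (2 G)`. The numerator is continuous on all of
`ℝ`, so a zero can be sought in `{α ≤ R}`, which is an interval since `α' = f'' (t + f f') / s³` and
`t + f f'` is increasing. No zero has `α = R`, because there `t f' = R s + f > 0` and
`N s² = (t + f f')² > 0`. The numerator has the sign of `t` both at such points and at points of `D`
far from the origin, so it changes sign on `{α ≤ R}`, and no limit at the ends of `D` is needed. -/

theorem quasiconvexOn_of_hasDerivAt_mul {s : Set ℝ} {φ c g : ℝ → ℝ} (hs : Convex ℝ s)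
    (hφ : ∀ t ∈ s, HasDerivAt φ (c t * g t) t) (hc : ∀ t ∈ s, 0 ≤ c t) (hg : MonotoneOn g s) :
    QuasiconvexOn ℝ s φ := by
  have hcont : ContinuousOn φ s := fun t ht => (hφ t ht).continuousAt.continuousWithinAt
  intro r
  refine OrdConnected.convex ⟨fun a ha b hb u hu => ?_⟩
  have hus : u ∈ s := hs.ordConnected.out ha.1 hb.1 hu
  refine ⟨hus, ?_⟩
  rcases le_total 0 (g u) with hgu | hgu
  · have hub : Icc u b ⊆ s := hs.ordConnected.out hus hb.1
    have hmono : MonotoneOn φ (Icc u b) :=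
      monotoneOn_of_hasDerivWithinAt_nonneg (convex_Icc u b) (hcont.mono hub)
        (fun t ht => (hφ t (hub (interior_subset ht))).hasDerivWithinAt) fun t ht =>
          have htI := interior_subset ht
          mul_nonneg (hc t (hub htI)) (hgu.trans (hg hus (hub htI) htI.1))
    exact (hmono (left_mem_Icc.2 hu.2) (right_mem_Icc.2 hu.2) hu.2).trans hb.2
  · have hau : Icc a u ⊆ s := hs.ordConnected.out ha.1 hus
    have hanti : AntitoneOn φ (Icc a u) :=
      antitoneOn_of_hasDerivWithinAt_nonpos (convex_Icc a u) (hcont.mono hau)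
        (fun t ht => (hφ t (hau (interior_subset ht))).hasDerivWithinAt) fun t ht =>
          have htI := interior_subset ht
          mul_nonpos_of_nonneg_of_nonpos (hc t (hau htI)) ((hg (hau htI) hus htI.2).trans hgu)
    exact (hanti (left_mem_Icc.2 hu.1) (right_mem_Icc.2 hu.1) hu.1).trans ha.2

theorem mul_add_pos_of_abs_lt_abs {u t : ℝ} (h : |u| < |t|) : 0 < t * (t + u) := by
  have : -(t * u) < t * t := calc
    -(t * u) ≤ |t| * |u| := by rw [← abs_mul]; exact neg_le_abs _
    _ < |t| * |t| := mul_lt_mul_of_pos_left h ((abs_nonneg u).trans_lt h)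
    _ = t * t := abs_mul_abs_self t
  linarith

/-- The norm of the tangent vector `(1, f' t)` of the graph of `f`. -/
def graphSpeed (f : ℝ → ℝ) (t : ℝ) : ℝ := Real.sqrt (1 + deriv f t ^ 2)

/-- The signed distance `α t` from the origin to the tangent line of the graph of `f` at `t`,
negative when the origin lies below that line. -/
def tangentOffset (f : ℝ → ℝ) (t : ℝ) : ℝ := (t * deriv f t - f t) / graphSpeed f t

/-- The power of the graph point `(t, f t)` with respect to the circle of radius `R` centred at the
origin. -/
def circlePower (f : ℝ → ℝ) (R t : ℝ) : ℝ := t ^ 2 + f t ^ 2 - R ^ 2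

/-- The first component `x t` of the equidistant parameterization. It is meaningful only where
`tangentOffset f t ≠ R`. -/
def equidistantFst (f : ℝ → ℝ) (R t : ℝ) : ℝ :=
  t + deriv f t / (2 * graphSpeed f t) * (circlePower f R t / (R - tangentOffset f t))

/-- The denominator of `equidistantFst`, cleared of the division inside `tangentOffset`; it equals
`graphSpeed f t * (R - tangentOffset f t)`. -/
def tangentGap (f : ℝ → ℝ) (R t : ℝ) : ℝ := R * graphSpeed f t + f t - t * deriv f t

/-- The numerator of `equidistantFst f R t - X` over the denominator `2 * tangentGap f R t`; unlike
the quotient, it is continuous across the ends of the admissible interval. -/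
def fiberNumerator (f : ℝ → ℝ) (R X t : ℝ) : ℝ :=
  2 * (t - X) * tangentGap f R t + deriv f t * circlePower f R t

section
variable {f : ℝ → ℝ} {R X t : ℝ}

theorem graphSpeed_pos (f : ℝ → ℝ) (t : ℝ) : 0 < graphSpeed f t := by
  unfold graphSpeed; positivity

theorem graphSpeed_sq (f : ℝ → ℝ) (t : ℝ) : graphSpeed f t ^ 2 = 1 + deriv f t ^ 2 :=
  Real.sq_sqrt (by positivity)

theorem rpow_three_halves_eq_graphSpeed_pow (f : ℝ → ℝ) (t : ℝ) :
    (1 + deriv f t ^ 2) ^ ((3 : ℝ) / 2) = graphSpeed f t ^ 3 := by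
  rw [Real.rpow_div_two_eq_sqrt 3 (by positivity)]
  exact Real.rpow_natCast _ 3

theorem tangentGap_eq_mul (f : ℝ → ℝ) (R t : ℝ) :
    tangentGap f R t = graphSpeed f t * (R - tangentOffset f t) := by
  have := (graphSpeed_pos f t).ne'
  unfold tangentGap tangentOffset
  field_simp
  ring

theorem tangentGap_pos_iff : 0 < tangentGap f R t ↔ tangentOffset f t < R := by
  rw [tangentGap_eq_mul, mul_pos_iff_of_pos_left (graphSpeed_pos f t), sub_pos]

theorem tangentGap_eq_zero_iff : tangentGap f R t = 0 ↔ tangentOffset f t = R := by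
  rw [tangentGap_eq_mul, mul_eq_zero_iff_left (graphSpeed_pos f t).ne', sub_eq_zero, eq_comm]

theorem equidistantFst_eq_add_div (f : ℝ → ℝ) (R t : ℝ) :
    equidistantFst f R t = t + deriv f t * circlePower f R t / (2 * tangentGap f R t) := by
  rw [equidistantFst, div_mul_div_comm, mul_assoc, ← tangentGap_eq_mul]

theorem equidistantFst_eq_of_fiberNumerator_eq_zero (ht : tangentOffset f t < R)
    (hX : fiberNumerator f R X t = 0) : equidistantFst f R t = X := by
  have hgap := (tangentGap_pos_iff.2 ht).ne'
  rw [equidistantFst_eq_add_div]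
  unfold fiberNumerator at hX
  field_simp
  linarith

theorem hasDerivAt_graphSpeed (hf' : Differentiable ℝ (deriv f)) (t : ℝ) :
    HasDerivAt (graphSpeed f) (deriv f t * deriv (deriv f) t / graphSpeed f t) t := by
  have hsq : HasDerivAt (fun u => 1 + deriv f u ^ 2) (2 * deriv f t * deriv (deriv f) t) t := by
    simpa using ((hf' t).hasDerivAt.pow 2).const_add 1
  refine (hsq.sqrt (by positivity)).congr_deriv ?_
  rw [← graphSpeed, mul_assoc, mul_div_mul_left _ _ two_ne_zero]

theorem hasDerivAt_tangentOffset (hf : Differentiable ℝ f) (hf' : Differentiable ℝ (deriv f))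
    (t : ℝ) :
    HasDerivAt (tangentOffset f)
      (deriv (deriv f) t / graphSpeed f t ^ 3 * (t + f t * deriv f t)) t := by
  have hs := (graphSpeed_pos f t).ne'
  have hnum : HasDerivAt (fun u => u * deriv f u - f u) (t * deriv (deriv f) t) t :=
    (((hasDerivAt_id' t).mul (hf' t).hasDerivAt).sub (hf t).hasDerivAt).congr_deriv (by ring)
  refine (hnum.div (hasDerivAt_graphSpeed hf' t) hs).congr_deriv ?_
  field_simp
  rw [graphSpeed_sq]
  ring

theorem continuous_tangentOffset (hf : Differentiable ℝ f) (hf' : Differentiable ℝ (deriv f)) :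
    Continuous (tangentOffset f) :=
  continuous_iff_continuousAt.2 fun t => (hasDerivAt_tangentOffset hf hf' t).continuousAt

theorem hasDerivAt_tangentGap (hf : Differentiable ℝ f) (hf' : Differentiable ℝ (deriv f))
    (R t : ℝ) :
    HasDerivAt (tangentGap f R) (deriv (deriv f) t * (R * deriv f t / graphSpeed f t - t)) t := by
  refine ((((hasDerivAt_graphSpeed hf' t).const_mul R).add (hf t).hasDerivAt).sub
    ((hasDerivAt_id' t).mul (hf' t).hasDerivAt)).congr_deriv ?_
  ring

theorem hasDerivAt_circlePower (hf : Differentiable ℝ f) (R t : ℝ) :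
    HasDerivAt (circlePower f R) (2 * (t + f t * deriv f t)) t := by
  refine (((hasDerivAt_pow 2 t).add ((hf t).hasDerivAt.pow 2)).sub_const (R ^ 2)).congr_deriv ?_
  push_cast
  ring

theorem continuous_fiberNumerator (hf : Differentiable ℝ f) (hf' : Differentiable ℝ (deriv f))
    (R X : ℝ) : Continuous (fiberNumerator f R X) := by
  have hgap : Continuous (tangentGap f R) :=
    continuous_iff_continuousAt.2 fun t => (hasDerivAt_tangentGap hf hf' R t).continuousAt
  have hpow : Continuous (circlePower f R) :=
    continuous_iff_continuousAt.2 fun t => (hasDerivAt_circlePower hf R t).continuousAt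
  have hderiv : Continuous (deriv f) := hf'.continuous
  unfold fiberNumerator
  fun_prop

theorem hasDerivAt_equidistantFst (hf : Differentiable ℝ f) (hf' : Differentiable ℝ (deriv f))
    (ht : tangentOffset f t < R) :
    HasDerivAt (equidistantFst f R)
      (deriv (deriv f) t * circlePower f R t * (R + f t * graphSpeed f t) /
          (2 * graphSpeed f t * tangentGap f R t ^ 2) +
        graphSpeed f t * (R + f t * graphSpeed f t) / tangentGap f R t) t := by
  have hs := (graphSpeed_pos f t).ne'
  have hgap := (tangentGap_pos_iff.2 ht).ne'
  have hquot := ((hf' t).hasDerivAt.mul (hasDerivAt_circlePower hf R t)).div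
    ((hasDerivAt_tangentGap hf hf' R t).const_mul 2) (mul_ne_zero two_ne_zero hgap)
  have hfirst : tangentGap f R t + deriv f t * (t + f t * deriv f t) =
      graphSpeed f t * (R + f t * graphSpeed f t) := by
    unfold tangentGap
    linear_combination -f t * graphSpeed_sq f t
  have hsecond : tangentGap f R t - deriv f t * (R * deriv f t / graphSpeed f t - t) =
      (R + f t * graphSpeed f t) / graphSpeed f t := by
    unfold tangentGap
    field_simp
    linear_combination R * graphSpeed_sq f t
  rw [funext (equidistantFst_eq_add_div f R)]
  refine ((hasDerivAt_id t).add hquot).congr_deriv ?_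
  calc _ = deriv (deriv f) t * circlePower f R t *
            (tangentGap f R t - deriv f t * (R * deriv f t / graphSpeed f t - t)) /
            (2 * tangentGap f R t ^ 2) +
          (tangentGap f R t + deriv f t * (t + f t * deriv f t)) / tangentGap f R t := by
        simp only [Pi.mul_apply]
        field_simp
        ring
    _ = _ := by
        rw [hfirst, hsecond]
        field_simp

theorem deriv_equidistantFst (hf : Differentiable ℝ f) (hf' : Differentiable ℝ (deriv f))
    (ht : tangentOffset f t < R) :
    deriv (equidistantFst f R) t =
      (1 / 2) * (deriv (deriv f) t * circlePower f R t * (R + f t * graphSpeed f t)) /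
          ((1 + deriv f t ^ 2) ^ ((3 : ℝ) / 2) * (R - tangentOffset f t) ^ 2) +
        (R + f t * graphSpeed f t) / (R - tangentOffset f t) := by
  have hs := (graphSpeed_pos f t).ne'
  have hR : R - tangentOffset f t ≠ 0 := (sub_pos.2 ht).ne'
  rw [(hasDerivAt_equidistantFst hf hf' ht).deriv, tangentGap_eq_mul,
    rpow_three_halves_eq_graphSpeed_pow]
  field_simp

theorem deriv_deriv_nonneg_of_convexOn (hf : Differentiable ℝ f) (hconv : ConvexOn ℝ univ f)
    (t : ℝ) : 0 ≤ deriv (deriv f) t :=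
  (monotoneOn_univ.1 (hconv.monotoneOn_deriv fun u _ => hf u)).deriv_nonneg

theorem deriv_equidistantFst_pos (hf : Differentiable ℝ f) (hf' : Differentiable ℝ (deriv f))
    (hconv : ConvexOn ℝ univ f) (hpos : 0 < f t) (hR : 0 ≤ R)
    (hpow : 0 ≤ circlePower f R t) (ht : tangentOffset f t < R) :
    0 < deriv (equidistantFst f R) t := by
  rw [(hasDerivAt_equidistantFst hf hf' ht).deriv]
  have hs := graphSpeed_pos f t
  have hgap := tangentGap_pos_iff.2 ht
  have hf'' := deriv_deriv_nonneg_of_convexOn hf hconv t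
  positivity

theorem monotone_mul_deriv_of_convexOn (hf : Differentiable ℝ f)
    (hf' : Differentiable ℝ (deriv f)) (hconv : ConvexOn ℝ univ f) (hnonneg : ∀ t, 0 ≤ f t) :
    Monotone fun t => f t * deriv f t := by
  refine monotone_of_hasDerivAt_nonneg (fun t => (hf t).hasDerivAt.mul (hf' t).hasDerivAt)
    fun t => ?_
  exact add_nonneg (mul_self_nonneg (deriv f t))
    (mul_nonneg (hnonneg t) (deriv_deriv_nonneg_of_convexOn hf hconv t))

theorem quasiconvexOn_tangentOffset (hf : Differentiable ℝ f) (hf' : Differentiable ℝ (deriv f))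
    (hconv : ConvexOn ℝ univ f) (hnonneg : ∀ t, 0 ≤ f t) :
    QuasiconvexOn ℝ univ (tangentOffset f) :=
  quasiconvexOn_of_hasDerivAt_mul convex_univ (fun t _ => hasDerivAt_tangentOffset hf hf' t)
    (fun t _ => div_nonneg (deriv_deriv_nonneg_of_convexOn hf hconv t)
      (pow_nonneg (graphSpeed_pos f t).le 3))
    ((monotone_id.add (monotone_mul_deriv_of_convexOn hf hf' hconv hnonneg)).monotoneOn univ)

theorem tangentOffset_zero_neg (hpos : 0 < f 0) : tangentOffset f 0 < 0 :=
  div_neg_of_neg_of_pos (by linarith) (graphSpeed_pos f 0)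

theorem mul_fiberNumerator_pos_of_tangentOffset_eq (hpos : 0 < f t) (hR : 0 ≤ R)
    (ht : tangentOffset f t = R) : 0 < t * fiberNumerator f R X t := by
  have hs := graphSpeed_pos f t
  have hgap := tangentGap_eq_zero_iff.2 ht
  have htangent : t * deriv f t = R * graphSpeed f t + f t := by
    unfold tangentGap at hgap
    linarith
  have htderiv : 0 < t * deriv f t := by rw [htangent]; positivity
  have hpower : circlePower f R t * graphSpeed f t ^ 2 = (t + f t * deriv f t) ^ 2 := by
    have hsq : (t * deriv f t - f t) ^ 2 = R ^ 2 * graphSpeed f t ^ 2 := by rw [htangent]; ring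
    unfold circlePower
    linear_combination (t ^ 2 + f t ^ 2) * graphSpeed_sq f t + hsq
  have hne : t + f t * deriv f t ≠ 0 := by
    refine right_ne_zero_of_mul (a := t) (ne_of_gt ?_)
    calc 0 < t ^ 2 + f t * (t * deriv f t) := by positivity
      _ = t * (t + f t * deriv f t) := by ring
  have hpowerpos : 0 < circlePower f R t :=
    pos_of_mul_pos_left (hpower ▸ sq_pos_of_ne_zero hne) (sq_nonneg _)
  calc 0 < t * deriv f t * circlePower f R t := mul_pos htderiv hpowerpos
    _ = t * fiberNumerator f R X t := by rw [fiberNumerator, hgap]; ring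

theorem mul_fiberNumerator_pos_of_abs_lt (hf : Differentiable ℝ f)
    (hf' : Differentiable ℝ (deriv f)) (hconv : ConvexOn ℝ univ f) (hpos : ∀ u, 0 < f u)
    (hR : 0 ≤ R) (hpow : 0 ≤ circlePower f R t) (ht : tangentOffset f t < R)
    (hfar : |f 0 * deriv f 0| < |t|) (hX : |2 * X| < |t|) :
    0 < t * fiberNumerator f R X t := by
  have hs := graphSpeed_pos f t
  have hgap := tangentGap_pos_iff.2 ht
  have hft := hpos t
  have hshift : 0 < t * (t + -(2 * X)) := mul_add_pos_of_abs_lt_abs (by rwa [abs_neg])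
  have hradial : 0 < t * (t + f t * deriv f t) := by
    have hmono := monotone_mul_deriv_of_convexOn hf hf' hconv fun u => (hpos u).le
    have hincr : 0 ≤ (f t * deriv f t - f 0 * deriv f 0) * (t - 0) :=
      monovary_iff_forall_mul_nonneg.1 (monovary_id_iff.2 hmono) 0 t
    linarith [mul_add_pos_of_abs_lt_abs hfar]
  have hmain : 0 < t ^ 2 * tangentGap f R t + t * deriv f t * circlePower f R t := by
    rcases le_or_gt 0 (t * deriv f t) with hslope | hslope
    · have ht0 : t ≠ 0 := left_ne_zero_of_mul hshift.ne'
      positivity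
    · have hdrop : 0 ≤ -(t * deriv f t) * R ^ 2 :=
        mul_nonneg (neg_nonneg.2 hslope.le) (sq_nonneg R)
      calc 0 < t ^ 2 * (R * graphSpeed f t) + f t * (t * (t + f t * deriv f t)) +
            -(t * deriv f t) * R ^ 2 := by positivity
        _ = t ^ 2 * tangentGap f R t + t * deriv f t * circlePower f R t := by
          unfold tangentGap circlePower
          ring
  calc 0 < t * (t + -(2 * X)) * tangentGap f R t +
        (t ^ 2 * tangentGap f R t + t * deriv f t * circlePower f R t) := by positivity
    _ = t * fiberNumerator f R X t := by
      unfold fiberNumerator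
      ring

theorem exists_tangentOffset_le_and_mul_fiberNumerator_pos (hf : Differentiable ℝ f)
    (hf' : Differentiable ℝ (deriv f)) (hconv : ConvexOn ℝ univ f) (hpos : ∀ u, 0 < f u)
    (hR : 0 ≤ R) (hpow : 0 ≤ circlePower f R t)
    (hfar : |f 0 * deriv f 0| < |t|) (hX : |2 * X| < |t|) :
    ∃ u, tangentOffset f u ≤ R ∧ 0 < t * fiberNumerator f R X u := by
  rcases lt_or_ge (tangentOffset f t) R with ht | ht
  · exact ⟨t, ht.le, mul_fiberNumerator_pos_of_abs_lt hf hf' hconv hpos hR hpow ht hfar hX⟩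
  · have hcont : Continuous fun c : ℝ => tangentOffset f (c * t) :=
      (continuous_tangentOffset hf hf').comp (continuous_mul_const t)
    obtain ⟨c, hc, hcR⟩ : ∃ c ∈ Icc (0 : ℝ) 1, tangentOffset f (c * t) = R := by
      refine intermediate_value_Icc zero_le_one hcont.continuousOn ⟨?_, by simpa using ht⟩
      simpa using (tangentOffset_zero_neg (hpos 0)).le.trans hR
    have hsign := mul_fiberNumerator_pos_of_tangentOffset_eq (X := X) (hpos (c * t)) hR hcR
    exact ⟨c * t, hcR.le, pos_of_mul_pos_right (mul_assoc c t _ ▸ hsign) hc.1⟩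

theorem exists_fiberNumerator_eq_zero (hf : Differentiable ℝ f)
    (hf' : Differentiable ℝ (deriv f)) (hconv : ConvexOn ℝ univ f) (hpos : ∀ t, 0 < f t)
    (hR : 0 ≤ R) (hpow : ∀ t, 0 ≤ circlePower f R t) (X : ℝ) :
    ∃ t, tangentOffset f t < R ∧ fiberNumerator f R X t = 0 := by
  obtain ⟨T, hT⟩ := exists_gt (max |f 0 * deriv f 0| |2 * X|)
  obtain ⟨hfar, hX⟩ := max_lt_iff.1 hT
  have hT0 : 0 < T := (abs_nonneg _).trans_lt hfar
  have habs : |T| = T := abs_of_pos hT0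
  obtain ⟨a, haR, ha⟩ := exists_tangentOffset_le_and_mul_fiberNumerator_pos (t := -T)
    hf hf' hconv hpos hR (hpow _) (by rwa [abs_neg, habs]) (by rwa [abs_neg, habs])
  obtain ⟨b, hbR, hb⟩ := exists_tangentOffset_le_and_mul_fiberNumerator_pos (t := T)
    hf hf' hconv hpos hR (hpow _) (by rwa [habs]) (by rwa [habs])
  have hsublevel : IsPreconnected {t ∈ univ | tangentOffset f t ≤ R} :=
    (quasiconvexOn_tangentOffset hf hf' hconv (fun t => (hpos t).le) R).isPreconnected
  obtain ⟨t, ⟨-, htR⟩, ht⟩ : ∃ t ∈ {t ∈ univ | tangentOffset f t ≤ R},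
      fiberNumerator f R X t = 0 :=
    hsublevel.intermediate_value ⟨mem_univ a, haR⟩ ⟨mem_univ b, hbR⟩
      (continuous_fiberNumerator hf hf' R X).continuousOn
      ⟨(neg_of_mul_pos_right ha (neg_nonpos.2 hT0.le)).le, (pos_of_mul_pos_right hb hT0.le).le⟩
  refine ⟨t, lt_of_le_of_ne htR fun hcontact => ?_, ht⟩
  simpa [ht] using mul_fiberNumerator_pos_of_tangentOffset_eq (X := X) (hpos t) hR hcontact

theorem bijOn_equidistantFst (hf : Differentiable ℝ f) (hf' : Differentiable ℝ (deriv f))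
    (hconv : ConvexOn ℝ univ f) (hpos : ∀ t, 0 < f t) (hR : 0 ≤ R)
    (hpow : ∀ t, 0 ≤ circlePower f R t) :
    BijOn (equidistantFst f R) {t | tangentOffset f t < R} univ := by
  refine ⟨mapsTo_univ _ _, StrictMonoOn.injOn ?_, fun X _ => ?_⟩
  · have hD : Convex ℝ {t | tangentOffset f t < R} := by
      simpa using (quasiconvexOn_tangentOffset hf hf' hconv fun t => (hpos t).le).convex_lt R
    exact strictMonoOn_of_deriv_pos hD
      (fun t ht => (hasDerivAt_equidistantFst hf hf' ht).continuousAt.continuousWithinAt)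
      fun t ht => deriv_equidistantFst_pos hf hf' hconv (hpos t) hR (hpow t)
        (interior_subset (s := {t | tangentOffset f t < R}) ht)
  · obtain ⟨t, htR, ht⟩ := exists_fiberNumerator_eq_zero hf hf' hconv hpos hR hpow X
    exact ⟨t, htR, equidistantFst_eq_of_fiberNumerator_eq_zero htR ht⟩

theorem stmt17_general (hf : Differentiable ℝ f) (hf' : Differentiable ℝ (deriv f))
    (hconv : ConvexOn ℝ univ f) (hpos : ∀ t, 0 < f t) (hR : 0 ≤ R)
    (hsep : ∀ t, R ^ 2 ≤ t ^ 2 + f t ^ 2) :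
    BijOn (equidistantFst f R) {t | tangentOffset f t < R} univ ∧
      ∀ t ∈ {t | tangentOffset f t < R},
        deriv (equidistantFst f R) t =
            (1 / 2) * (deriv (deriv f) t * circlePower f R t * (R + f t * graphSpeed f t)) /
              ((1 + deriv f t ^ 2) ^ ((3 : ℝ) / 2) * (R - tangentOffset f t) ^ 2) +
            (R + f t * graphSpeed f t) / (R - tangentOffset f t) ∧
          0 < deriv (equidistantFst f R) t := by
  have hpow : ∀ t, 0 ≤ circlePower f R t := fun t => sub_nonneg.2 (hsep t)
  exact ⟨bijOn_equidistantFst hf hf' hconv hpos hR hpow, fun t ht =>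
    ⟨deriv_equidistantFst hf hf' ht,
      deriv_equidistantFst_pos hf hf' hconv (hpos t) hR (hpow t) ht⟩⟩

end

theorem stmt17 (f : ℝ → ℝ) (hfpos : ∀ t, 0 < f t)
    (hfconv : ConvexOn ℝ Set.univ f) (hfC2 : ContDiff ℝ 2 f)
    (R : ℝ) (hR : 0 < R)
    (hsep : ∀ t : ℝ, R ^ 2 < t ^ 2 + f t ^ 2)
    (α : ℝ → ℝ)
    (hα : ∀ s : ℝ, α s = (s * deriv f s - f s) / Real.sqrt (1 + deriv f s ^ 2))
    (D : Set ℝ) (hD : D = {t : ℝ | α t < R})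
    (x : ℝ → ℝ)
    (hx : ∀ t : ℝ, x t = t + deriv f t / (2 * Real.sqrt (1 + deriv f t ^ 2)) *
        ((t ^ 2 + f t ^ 2 - R ^ 2) / (R - α t))) :
    Set.BijOn x D Set.univ ∧
      ∀ t ∈ D,
        deriv x t =
            (1 / 2) * (deriv (deriv f) t * (t ^ 2 + f t ^ 2 - R ^ 2) *
                (R + f t * Real.sqrt (1 + deriv f t ^ 2))) /
              ((1 + deriv f t ^ 2) ^ ((3 : ℝ) / 2) * (R - α t) ^ 2) +
            (R + f t * Real.sqrt (1 + deriv f t ^ 2)) / (R - α t) ∧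
          0 < deriv x t := by
  obtain rfl : α = tangentOffset f := funext hα
  obtain rfl : x = equidistantFst f R := funext hx
  exact hD ▸ stmt17_general (hfC2.differentiable two_ne_zero) hfC2.differentiable_deriv_two
    hfconv hfpos hR.le fun t => (hsep t).le

end
end
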